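/- If G is a finite nilpotent group and χ is an irreducible complex character of G of degree greater than 1, then there exist a maximal subgroup H of G and an irreducible character ψ of H such that χ is induced from ψ. -/

import Mathlib

/-!
Let `ρ` be the given representation. By Schur's lemma the elements of `G` acting by scalars form the
preimage of the centre of `ρ G`, and this is a proper subgroup because the degree exceeds `1`. As
`G` is nilpotent, there is a `z` outside it all of whose commutators act by scalars, so that
`ρ g * ρ z = μ g • (ρ z * ρ g)` for a nontrivial linear character `μ` of `G`. Replacing `z` by a
power makes the order of `μ` a prime, and then `H = ker μ` is a maximal subgroup
(`exists_prime_twist`, `isCoatom_ker`).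

Let `P` be the projection onto an eigenspace of `ρ z`, along the other eigenspaces
(`exists_eigenprojection`). It commutes with `ρ H`, while an `x ∉ H` moves the eigenspace to a
different one, so `P * ρ x * P = 0`. If `T` is an `H`-endomorphism of the range of `P`, extended by
zero, then `∑ x, ρ x⁻¹ * T * ρ x` commutes with `ρ G`, hence is a scalar `c`, and multiplying by `P`
on both sides gives `|H| • T = c • P` (`exists_sum_conj_eq`). This has two consequences:

* every `H`-endomorphism of the range of `P` is a scalar, so the range of `P` is an irreducible
  representation of `H` (`blockRep_hasScalarCommutant`);
* for `T = P` it gives `∑ x, ρ x⁻¹ * P * ρ x = |H|`, and taking the trace of the product with `ρ g`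
  yields the induced character formula (`trace_eq_inducedChar`).
-/


open scoped Classical in
/-- The character of `G` induced from the function `ψ` on the subgroup `H`
(the usual induced-character formula, with `ψ` extended by zero off `H`). -/
noncomputable def inducedChar {G : Type} [Group G] [Fintype G]
    (H : Subgroup G) (ψ : H → ℂ) : G → ℂ :=
  fun g => (Nat.card H : ℂ)⁻¹ *
    ∑ x : G, if h : x * g * x⁻¹ ∈ H then ψ ⟨x * g * x⁻¹, h⟩ else 0

open CategoryTheory

namespace NilpotentInduced

open scoped commutatorElement

variable {G : Type} [Group G] {V : Type} [AddCommGroup V] [Module ℂ V]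

/-- The centralizer of the representation `ρ` in `End V` consists of scalars; for finite `G`
and `V` nonzero and finite-dimensional, this is equivalent to the irreducibility of `ρ`. -/
def HasScalarCommutant (ρ : G →* Module.End ℂ V) : Prop :=
  ∀ T : Module.End ℂ V, (∀ g, ρ g * T = T * ρ g) → ∃ c : ℂ, T = c • 1

lemma hasScalarCommutant_of_simple (V : FDRep ℂ G) [Simple V] :
    HasScalarCommutant (V := V) V.ρ := by
  intro T hT
  have h1 : Module.finrank ℂ (V ⟶ V) = 1 := finrank_endomorphism_simple_eq_one ℂ V
  let f : V ⟶ V := ⟨InducedCategory.homMk (ModuleCat.ofHom T), fun g => by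
    apply InducedCategory.hom_ext
    apply ModuleCat.hom_ext
    exact (hT g).symm⟩
  obtain ⟨c, hc⟩ := (finrank_eq_one_iff_of_nonzero' (𝟙 V) (id_nonzero V)).1 h1 f
  refine ⟨c, ?_⟩
  have := congrArg (fun F : V ⟶ V => F.hom.hom.hom) hc
  exact this.symm

/-- The converse of Schur's lemma, which holds in characteristic zero by Maschke's theorem. -/
lemma simple_of_hasScalarCommutant [Finite G] [Module.Finite ℂ V] [Nontrivial V]
    (ρ : G →* Module.End ℂ V) (h : HasScalarCommutant ρ) : Simple (FDRep.of ρ) := by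
  have : NeZero (Nat.card G : ℂ) := ⟨by exact_mod_cast Nat.card_pos.ne'⟩
  rw [FDRep.simple_iff_end_is_rank_one]
  rw [finrank_eq_one_iff']
  refine ⟨𝟙 _, ?_, fun f => ?_⟩
  · intro h0
    have h1 : (1 : Module.End ℂ V) = 0 :=
      congrArg (fun F : FDRep.of ρ ⟶ FDRep.of ρ => F.hom.hom.hom) h0
    exact one_ne_zero h1
  · obtain ⟨c, hc⟩ := h f.hom.hom.hom fun g =>
      (congrArg (fun F => F.hom.hom) (f.comm g)).symm
    refine ⟨c, ?_⟩
    apply Action.Hom.ext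
    apply InducedCategory.hom_ext
    apply ModuleCat.hom_ext
    exact hc.symm

/-- In a nilpotent group, every proper subgroup `N` omits some `z` all of whose commutators lie
in `N`. -/
lemma exists_commutator_mem [Group.IsNilpotent G] (N : Subgroup G) (hN : N ≠ ⊤) :
    ∃ z, z ∉ N ∧ ∀ y, ⁅z, y⁆ ∈ N := by
  by_contra! h
  obtain ⟨n, hn⟩ := Group.IsNilpotent.nilpotent G
  have key : ∀ n, Subgroup.upperCentralSeries G n ≤ N := by
    intro n
    induction n with
    | zero => simp
    | succ k ih =>
      intro z hz
      by_contra hzN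
      obtain ⟨y, hy⟩ := h z hzN
      exact hy (ih (Subgroup.mem_upperCentralSeries_succ_iff.1 hz y))
  exact hN (top_le_iff.1 (hn ▸ key n))

/-- The subgroup of elements acting by scalars; for irreducible `ρ` it is the preimage of the centre
of `ρ G`. -/
def scalarSubgroup (ρ : G →* Module.End ℂ V) : Subgroup G where
  carrier := {g | ∃ c : ℂ, ρ g = c • 1}
  one_mem' := ⟨1, by simp⟩
  mul_mem' := by
    rintro a b ⟨c, hc⟩ ⟨d, hd⟩
    exact ⟨c * d, by rw [map_mul, hc, hd, smul_mul_smul_comm, one_mul]⟩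
  inv_mem' := by
    rintro a ⟨c, hc⟩
    refine ⟨c⁻¹, ?_⟩
    have h1 : ρ a * ρ a⁻¹ = 1 := by rw [← map_mul, mul_inv_cancel, map_one]
    rw [hc, smul_mul_assoc, one_mul] at h1
    by_cases h0 : c = 0
    · -- `c = 0` forces `V = 0`, where any two endomorphisms agree
      rw [h0, zero_smul] at h1
      rw [← one_mul (ρ a⁻¹), ← one_mul (c⁻¹ • (1 : Module.End ℂ V)), ← h1, zero_mul, zero_mul]
    · rw [← h1, smul_smul, inv_mul_cancel₀ h0, one_smul]

lemma scalarSubgroup_ne_top [Module.Finite ℂ V] (hdim : 1 < Module.finrank ℂ V)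
    (ρ : G →* Module.End ℂ V) (hρ : HasScalarCommutant ρ) : scalarSubgroup ρ ≠ ⊤ := by
  intro h
  have hs : ∀ g, ∃ c : ℂ, ρ g = c • 1 := fun g =>
    show g ∈ scalarSubgroup ρ from h ▸ Subgroup.mem_top g
  have h1 : ∀ T : Module.End ℂ V, ∃ c : ℂ, c • (1 : Module.End ℂ V) = T := by
    intro T
    obtain ⟨c, hc⟩ := hρ T fun g => by
      obtain ⟨c, hc⟩ := hs g
      rw [hc, smul_mul_assoc, mul_smul_comm, one_mul, mul_one]
    exact ⟨c, hc.symm⟩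
  have h2 : Module.finrank ℂ (Module.End ℂ V) ≤ 1 := finrank_le_one _ h1
  have h3 : Module.finrank ℂ (Module.End ℂ V) = Module.finrank ℂ V * Module.finrank ℂ V :=
    Module.finrank_linearMap ℂ ℂ V V
  nlinarith

/-- The kernel of a linear character of prime order is a maximal subgroup. -/
lemma isCoatom_ker {p : ℕ} (hp : p.Prime) (μ : G →* ℂ) (hμ : μ ^ p = 1) (hμ1 : μ ≠ 1) :
    IsCoatom μ.ker := by
  have hpow : ∀ g, μ g ^ p = 1 := fun g => by
    have := DFunLike.congr_fun hμ g
    simpa using this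
  refine ⟨fun h => hμ1 ?_, fun M hM => ?_⟩
  · ext g
    exact MonoidHom.mem_ker.1 (h ▸ Subgroup.mem_top g)
  · obtain ⟨hle, x, hxM, hxK⟩ := SetLike.lt_iff_le_and_exists.1 hM
    have hprim : IsPrimitiveRoot (μ x) p :=
      have : Fact p.Prime := ⟨hp⟩
      IsPrimitiveRoot.iff_orderOf.2 (orderOf_eq_prime (hpow x) fun h => hxK (MonoidHom.mem_ker.2 h))
    have : NeZero p := ⟨hp.ne_zero⟩
    rw [eq_top_iff]
    intro g _
    obtain ⟨i, -, hi⟩ := hprim.eq_pow_of_pow_eq_one (hpow g)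
    have hk : g * (x ^ i)⁻¹ ∈ μ.ker := by
      rw [MonoidHom.mem_ker, map_mul, ← hi, ← map_pow, ← map_mul, mul_inv_cancel, map_one]
    have := M.mul_mem (hle hk) (M.pow_mem hxM i)
    rwa [inv_mul_cancel_right] at this

/-- An element `z` whose image commutes with `ρ G` up to a linear character `μ` of prime order:
a suitable power of an element lying over the second centre of `ρ G` but not over its centre. -/
lemma exists_prime_twist [Finite G] [Group.IsNilpotent G] [Module.Finite ℂ V]
    (hdim : 1 < Module.finrank ℂ V) (ρ : G →* Module.End ℂ V) (hρ : HasScalarCommutant ρ) :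
    ∃ (z : G) (μ : G →* ℂ), (∀ g, ρ g * ρ z = μ g • (ρ z * ρ g)) ∧
      ∃ p : ℕ, p.Prime ∧ μ ^ p = 1 ∧ μ ≠ 1 := by
  have : Nontrivial V := Module.nontrivial_of_finrank_pos (R := ℂ) (by omega)
  obtain ⟨z, hz, hcomm⟩ := exists_commutator_mem _ (scalarSubgroup_ne_top hdim ρ hρ)
  have hinj : ∀ (g : G) (c d : ℂ), c • ρ g = d • ρ g → c = d := by
    intro g c d h
    refine smul_left_injective ℂ (one_ne_zero (α := Module.End ℂ V)) ?_
    have := congrArg (· * ρ g⁻¹) h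
    simpa [smul_mul_assoc, ← map_mul] using this
  have hex : ∀ g, ∃ c : ℂ, ρ g * ρ z = c • (ρ z * ρ g) := by
    intro g
    obtain ⟨c, hc⟩ : ∃ c : ℂ, ρ ⁅z, g⁆⁻¹ = c • 1 := (scalarSubgroup ρ).inv_mem (hcomm g)
    refine ⟨c, ?_⟩
    have : g * z = ⁅z, g⁆⁻¹ * (z * g) := by rw [commutatorElement_def]; group
    rw [← map_mul, this, map_mul, hc, smul_mul_assoc, one_mul, map_mul]
  choose f hf using hex
  let μ : G →* ℂ :=
    { toFun := f
      map_one' := hinj z _ _ (by simpa using (hf 1).symm)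
      map_mul' := fun g h => hinj (z * (g * h)) _ _ (by
        rw [map_mul, map_mul ρ g h, ← map_mul ρ g h, ← hf, map_mul, mul_assoc, hf h,
          mul_smul_comm, ← mul_assoc, hf g, smul_mul_assoc, smul_smul, mul_comm (f h), mul_assoc]) }
  have hμ : ∀ g, ρ g * ρ z = μ g • (ρ z * ρ g) := hf
  have hμ1 : μ ≠ 1 := by
    intro h
    refine hz (hρ (ρ z) fun g => ?_)
    rw [hμ, h, MonoidHom.one_apply, one_smul]
  have hfin : IsOfFinOrder μ := isOfFinOrder_iff_pow_eq_one.2 ⟨Nat.card G, Nat.card_pos, by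
    ext g
    rw [MonoidHom.pow_apply, ← map_pow, pow_card_eq_one', map_one, MonoidHom.one_apply]⟩
  obtain ⟨p, hp, k, hk⟩ := Nat.exists_prime_and_dvd (mt orderOf_eq_one_iff.1 hμ1)
  have hkpos : 0 < k := by
    have := hfin.orderOf_pos
    rw [hk] at this
    exact Nat.pos_of_mul_pos_left this
  refine ⟨z ^ k, μ ^ k, fun g => ?_, p, hp, ?_, ?_⟩
  · generalize k = k
    induction k with
    | zero => simp
    | succ k ih =>
      rw [pow_succ z, map_mul, ← mul_assoc, ih, smul_mul_assoc, mul_assoc, hμ, mul_smul_comm,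
        smul_smul, ← mul_assoc, pow_succ μ]
      rfl
  · rw [← pow_mul, mul_comm, ← hk, pow_orderOf_eq_one]
  · refine pow_ne_one_of_lt_orderOf hkpos.ne' ?_
    rw [hk]
    exact lt_mul_of_one_lt_left hkpos hp.one_lt

/-- The projection onto an `α`-eigenspace of `T`, along the other eigenspaces, is
`P = n⁻¹ ∑_{j < n} (α⁻¹ T) ^ j`. -/
lemma exists_eigenprojection [Module.Finite ℂ V] [Nontrivial V] (T : Module.End ℂ V) {n : ℕ}
    (hn : 0 < n) (hT : T ^ n = 1) :
    ∃ (α : ℂ) (P : Module.End ℂ V), α ≠ 0 ∧ P ≠ 0 ∧ P * P = P ∧ T * P = α • P ∧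
      ∀ S, Commute S T → Commute S P := by
  obtain ⟨α, hα⟩ := Module.End.exists_eigenvalue T
  obtain ⟨v, hv⟩ := hα.exists_hasEigenvector
  have hαn : α ^ n = 1 := by
    have h1 := hv.pow_apply n
    rw [hT, Module.End.one_apply] at h1
    exact (smul_left_injective ℂ hv.2 (by simpa using h1)).symm
  have hα0 : α ≠ 0 := by
    rintro rfl
    rw [zero_pow hn.ne'] at hαn
    exact zero_ne_one hαn
  have hn0 : (n : ℂ) ≠ 0 := by exact_mod_cast hn.ne'
  set S : Module.End ℂ V := α⁻¹ • T with hS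
  have hSn : S ^ n = 1 := by rw [hS, smul_pow, hT, inv_pow, hαn, inv_one, one_smul]
  set P : Module.End ℂ V := (n : ℂ)⁻¹ • ∑ j ∈ Finset.range n, S ^ j with hP
  have hSP : S * P = P := by
    have h1 := mul_geom_sum S n
    rw [hSn, sub_self, sub_mul, one_mul, sub_eq_zero] at h1
    rw [hP, mul_smul_comm, h1]
  have hSjP : ∀ j, S ^ j * P = P := by
    intro j
    induction j with
    | zero => simp
    | succ j ih => rw [pow_succ, mul_assoc, hSP, ih]
  refine ⟨α, P, hα0, ?_, ?_, ?_, fun R hR => ?_⟩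
  · intro h0
    have hSv : ∀ j, (S ^ j) v = v := by
      intro j
      have h1 : S v = v := by
        rw [hS, LinearMap.smul_apply, hv.apply_eq_smul, smul_smul, inv_mul_cancel₀ hα0, one_smul]
      induction j with
      | zero => simp
      | succ j ih => rw [pow_succ, Module.End.mul_apply, h1, ih]
    have h2 : P v = v := by
      rw [hP, LinearMap.smul_apply, LinearMap.sum_apply]
      simp only [hSv, Finset.sum_const, Finset.card_range]
      rw [← Nat.cast_smul_eq_nsmul ℂ, smul_smul, inv_mul_cancel₀ hn0, one_smul]
    rw [h0] at h2
    exact hv.2 h2.symm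
  · nth_rewrite 1 [hP]
    rw [smul_mul_assoc, Finset.sum_mul]
    simp only [hSjP, Finset.sum_const, Finset.card_range]
    rw [← Nat.cast_smul_eq_nsmul ℂ, smul_smul, inv_mul_cancel₀ hn0, one_smul]
  · nth_rewrite 2 [← hSP]
    rw [hS, smul_mul_assoc, smul_smul, mul_inv_cancel₀ hα0, one_smul]
  · have hRS : Commute R S := hR.smul_right _
    exact (Commute.sum_right _ _ _ fun j _ => hRS.pow_right j).smul_right _

section Imprimitive

variable {ρ : G →* Module.End ℂ V} {H : Subgroup G} {P : Module.End ℂ V}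

/-- Averaging an `H`-equivariant endomorphism of the block `P V` over `G` and compressing back to
`P V` multiplies it by `|H|`; Schur's lemma for `G` then makes it a multiple of `P`. -/
lemma exists_sum_conj_eq [Fintype G] (hρ : HasScalarCommutant ρ)
    (hoff : ∀ x, x ∉ H → P * ρ x * P = 0) (hidem : P * P = P)
    (T : Module.End ℂ V) (hTl : P * T = T) (hTr : T * P = T)
    (hT : ∀ h ∈ H, Commute (ρ h) T) :
    ∃ c : ℂ, ∑ x : G, ρ x⁻¹ * T * ρ x = c • 1 ∧ c • P = (Nat.card H : ℂ) • T := by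
  classical
  have hinv : ∀ x, ρ x⁻¹ * ρ x = 1 := fun x => by rw [← map_mul, inv_mul_cancel, map_one]
  obtain ⟨c, hc⟩ := hρ (∑ x : G, ρ x⁻¹ * T * ρ x) fun g => by
    rw [Finset.mul_sum, Finset.sum_mul]
    refine Fintype.sum_equiv (Equiv.mulRight g⁻¹) _ _ fun x => ?_
    rw [Equiv.coe_mulRight, mul_assoc _ _ (ρ g), ← map_mul ρ (x * g⁻¹), inv_mul_cancel_right,
      mul_inv_rev, inv_inv, map_mul]
    simp only [mul_assoc]
  refine ⟨c, hc, ?_⟩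
  have h1 : P * (∑ x : G, ρ x⁻¹ * T * ρ x) * P = c • P := by
    rw [hc, mul_smul_comm, smul_mul_assoc, mul_one, hidem]
  rw [← h1, Finset.mul_sum, Finset.sum_mul]
  have h2 : ∀ x : G, P * (ρ x⁻¹ * T * ρ x) * P = if x ∈ H then T else 0 := by
    intro x
    split_ifs with hx
    · rw [mul_assoc (ρ x⁻¹), ← (hT x hx).eq, ← mul_assoc (ρ x⁻¹), hinv, one_mul, hTl, hTr]
    · have : P * (ρ x⁻¹ * T * ρ x) * P = P * ρ x⁻¹ * T * (P * ρ x * P) := by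
        nth_rewrite 1 [← hTr]
        simp only [mul_assoc]
      rw [this, hoff x hx, mul_zero]
  simp only [h2]
  rw [← Finset.sum_filter, Finset.sum_const, ← Nat.cast_smul_eq_nsmul ℂ, Nat.card_eq_fintype_card,
    Fintype.card_subtype]

/-- The action of `H` on the block `P V`, when `P` commutes with `H`. -/
noncomputable def blockRep (ρ : G →* Module.End ℂ V) (H : Subgroup G) (P : Module.End ℂ V)
    (hcomm : ∀ h ∈ H, Commute (ρ h) P) : H →* Module.End ℂ (LinearMap.range P) where
  toFun h := (ρ h).restrict (p := LinearMap.range P) (q := LinearMap.range P) (by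
    rintro _ ⟨v, rfl⟩
    exact ⟨ρ h v, (LinearMap.congr_fun (hcomm h h.2).eq v).symm⟩)
  map_one' := by ext; simp
  map_mul' x y := by ext; simp

lemma blockRep_hasScalarCommutant [Fintype G] (hρ : HasScalarCommutant ρ)
    (hoff : ∀ x, x ∉ H → P * ρ x * P = 0) (hidem : P * P = P)
    (hcomm : ∀ h ∈ H, Commute (ρ h) P) :
    HasScalarCommutant (blockRep ρ H P hcomm) := by
  intro T hT
  have hPw : ∀ w : LinearMap.range P, P.rangeRestrict (w : V) = w := by
    rintro ⟨_, v, rfl⟩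
    exact Subtype.ext (LinearMap.congr_fun hidem v)
  have hPw' : ∀ w : LinearMap.range P, P (w : V) = w := fun w => congrArg Subtype.val (hPw w)
  have hrr : ∀ v, P.rangeRestrict (P v) = P.rangeRestrict v := fun v => hPw (P.rangeRestrict v)
  -- extend `T` by zero along `P`
  let T' : Module.End ℂ V := (LinearMap.range P).subtype ∘ₗ T ∘ₗ P.rangeRestrict
  obtain ⟨c, -, hc⟩ := exists_sum_conj_eq hρ hoff hidem T'
    (by ext v; exact hPw' _)
    (by ext v; exact congrArg (fun w => (T w : V)) (hrr v))
    (fun h hh => by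
      ext v
      have h1 := LinearMap.congr_fun (hT ⟨h, hh⟩) (P.rangeRestrict v)
      have h2 : blockRep ρ H P hcomm ⟨h, hh⟩ (P.rangeRestrict v) = P.rangeRestrict (ρ h v) :=
        Subtype.ext (LinearMap.congr_fun (hcomm h hh).eq v)
      have h3 := congrArg Subtype.val h1
      rw [Module.End.mul_apply, Module.End.mul_apply, h2] at h3
      exact h3)
  have hH : (Nat.card H : ℂ) ≠ 0 := by exact_mod_cast Nat.card_pos.ne'
  refine ⟨(Nat.card H : ℂ)⁻¹ * c, ?_⟩
  ext w
  have h1 := LinearMap.congr_fun hc (w : V)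
  rw [LinearMap.smul_apply, LinearMap.smul_apply, hPw'] at h1
  have h2 : T' (w : V) = T w := by
    change (T (P.rangeRestrict (w : V)) : V) = T w
    rw [hPw]
  rw [h2] at h1
  change (T w : V) = ((Nat.card H : ℂ)⁻¹ * c) • (w : V)
  rw [mul_smul, h1, smul_smul, inv_mul_cancel₀ hH, one_smul]

lemma trace_blockRep [Module.Finite ℂ V] (hidem : P * P = P)
    (hcomm : ∀ h ∈ H, Commute (ρ h) P) (h : H) :
    LinearMap.trace ℂ _ (blockRep ρ H P hcomm h) = LinearMap.trace ℂ V (ρ h * P) := by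
  have hPw : ∀ w : LinearMap.range P, P (w : V) = w := by
    rintro ⟨_, v, rfl⟩
    exact LinearMap.congr_fun hidem v
  have h1 : blockRep ρ H P hcomm h =
      (P.rangeRestrict ∘ₗ ρ h) ∘ₗ (LinearMap.range P).subtype := by
    ext w
    change ρ h (w : V) = P (ρ h (w : V))
    have := LinearMap.congr_fun (hcomm h h.2).eq (w : V)
    rw [Module.End.mul_apply, Module.End.mul_apply, hPw] at this
    exact this
  have h2 : (LinearMap.range P).subtype ∘ₗ (P.rangeRestrict ∘ₗ ρ h) = P * ρ h := rfl
  rw [h1, LinearMap.trace_comp_comm', h2, LinearMap.trace_mul_comm]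

/-- A block projection `P ≠ 0` which commutes with `H` and satisfies `P * ρ x * P = 0` off `H`
exhibits the character of `ρ` as induced from that of the block. -/
lemma trace_eq_inducedChar [Fintype G] [Module.Finite ℂ V] (hρ : HasScalarCommutant ρ) (hP0 : P ≠ 0)
    (hoff : ∀ x, x ∉ H → P * ρ x * P = 0) (hidem : P * P = P)
    (hcomm : ∀ h ∈ H, Commute (ρ h) P) (g : G) :
    LinearMap.trace ℂ V (ρ g) =
      inducedChar H (fun h => LinearMap.trace ℂ _ (blockRep ρ H P hcomm h)) g := by
  classical
  have hH : (Nat.card H : ℂ) ≠ 0 := by exact_mod_cast Nat.card_pos.ne'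
  obtain ⟨c, hsum, hc⟩ := exists_sum_conj_eq hρ hoff hidem P hidem hidem hcomm
  have hcH : c = Nat.card H := smul_left_injective ℂ hP0 hc
  rw [hcH] at hsum
  have hterm : ∀ x : G, (if h : x * g * x⁻¹ ∈ H then
      LinearMap.trace ℂ _ (blockRep ρ H P hcomm ⟨x * g * x⁻¹, h⟩) else 0) =
        LinearMap.trace ℂ V (ρ g * (ρ x⁻¹ * P * ρ x)) := by
    intro x
    have h1 : LinearMap.trace ℂ V (ρ g * (ρ x⁻¹ * P * ρ x)) =
        LinearMap.trace ℂ V (ρ (x * g * x⁻¹) * P) := by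
      rw [← mul_assoc, LinearMap.trace_mul_comm, map_mul ρ, map_mul ρ]
      simp only [mul_assoc]
    rw [h1]
    split_ifs with h
    · exact trace_blockRep hidem hcomm _
    · rw [← hidem, ← mul_assoc, LinearMap.trace_mul_comm, ← mul_assoc, hoff _ h, map_zero]
  rw [inducedChar]
  simp only [hterm]
  rw [← map_sum, ← Finset.mul_sum, hsum, mul_smul_comm, mul_one, map_smul, smul_eq_mul,
    inv_mul_cancel_left₀ hH]

end Imprimitive

end NilpotentInduced

open NilpotentInduced in
/-- If `G` is a finite nilpotent group and `χ` is an irreducible complex character of `G`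
of degree greater than 1, then there is a maximal subgroup `H` of `G` and an irreducible
character `ψ` of `H` such that `χ = Ind_H^G ψ`. -/
theorem nilpotent_char_induced_from_maximal
    (G : Type) [Group G] [Fintype G] [Group.IsNilpotent G]
    (V : FDRep ℂ G) [CategoryTheory.Simple V]
    (hdeg : 1 < Module.finrank ℂ V) :
    ∃ H : Subgroup G, IsCoatom H ∧
      ∃ W : FDRep ℂ H, CategoryTheory.Simple W ∧
        V.character = inducedChar H W.character := by
  let ρ : G →* Module.End ℂ V := V.ρ
  have hρ : HasScalarCommutant ρ := hasScalarCommutant_of_simple V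
  have : Nontrivial V := Module.nontrivial_of_finrank_pos (R := ℂ) (by omega)
  obtain ⟨z, μ, hz, p, hp, hμp, hμ1⟩ := exists_prime_twist hdeg ρ hρ
  obtain ⟨α, P, hα, hP0, hidem, hTP, hPcomm⟩ := exists_eigenprojection (ρ z) Nat.card_pos
    (by rw [← map_pow, pow_card_eq_one', map_one] : ρ z ^ Nat.card G = 1)
  have hcomm : ∀ h ∈ μ.ker, Commute (ρ h) P := fun h hh => hPcomm _ (by
    rw [Commute, SemiconjBy, hz, MonoidHom.mem_ker.1 hh, one_smul])
  have hPT : P * ρ z = α • P := by rw [← (hPcomm _ (Commute.refl _)).eq, hTP]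
  -- `ρ x` carries the `α`-eigenspace of `ρ z` to a different eigenspace when `μ x ≠ 1`
  have hoff : ∀ x, x ∉ μ.ker → P * ρ x * P = 0 := by
    intro x hx
    have h1 : α • (P * ρ x * P) = (μ x * α) • (P * ρ x * P) := by
      calc α • (P * ρ x * P) = P * (ρ x * ρ z) * P := by
            rw [← mul_smul_comm, ← hTP]; simp only [mul_assoc]
        _ = μ x • (P * ρ z * (ρ x * P)) := by
            rw [hz, mul_smul_comm, smul_mul_assoc]; simp only [mul_assoc]
        _ = (μ x * α) • (P * ρ x * P) := by
            rw [hPT, smul_mul_assoc, smul_smul, mul_assoc]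
    by_contra h0
    have h2 : α = μ x * α := smul_left_injective ℂ h0 h1
    exact hx (MonoidHom.mem_ker.2 (mul_right_cancel₀ hα (by rw [one_mul, ← h2])))
  have : Nontrivial (LinearMap.range P) := by
    rw [Submodule.nontrivial_iff_ne_bot, Ne, LinearMap.range_eq_bot]
    exact hP0
  refine ⟨μ.ker, isCoatom_ker hp μ hμp hμ1, FDRep.of (blockRep ρ μ.ker P hcomm),
    simple_of_hasScalarCommutant _ (blockRep_hasScalarCommutant hρ hoff hidem hcomm), ?_⟩
  ext g
  exact trace_eq_inducedChar hρ hP0 hoff hidem hcomm g
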